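/- arXiv:2411.15038 — 8 statements merged into one kernel-verified Lean document; each statement's English description precedes it below -/
import Mathlib

section
/- Consider the smooth vector fields on ℝ² \ {0} given in Cartesian components by e₁(x,y) = ((x²/2 + y²)/r², −xy/(2r²)) and e₂(x,y) = (−xy/(2r²), (y²/2 + x²)/r²), where r² = x² + y². Then their Lie bracket satisfies [e₁, e₂](x,y) := De₂(x,y)·e₁(x,y) − De₁(x,y)·e₂(x,y) = (1/(2r²))·(−y, x), i.e. [e₁, e₂] = (1/(2r²))·∂φ. -/
open Real

/-- Cartesian expression of the first reference frame field `e₁`. -/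
noncomputable def frameE₁ : ℝ × ℝ → ℝ × ℝ :=
  fun p => (((p.1 ^ 2 / 2 + p.2 ^ 2) / (p.1 ^ 2 + p.2 ^ 2)),
            -(p.1 * p.2) / (2 * (p.1 ^ 2 + p.2 ^ 2)))

/-- Cartesian expression of the second reference frame field `e₂`. -/
noncomputable def frameE₂ : ℝ × ℝ → ℝ × ℝ :=
  fun p => (-(p.1 * p.2) / (2 * (p.1 ^ 2 + p.2 ^ 2)),
            ((p.2 ^ 2 / 2 + p.1 ^ 2) / (p.1 ^ 2 + p.2 ^ 2)))

/-- Directional derivative of a rational function along a line. -/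
lemma quot_dir (N D : ℝ × ℝ → ℝ) (N' D' : ℝ × ℝ →L[ℝ] ℝ) (p : ℝ × ℝ)
    (hN : HasFDerivAt N N' p) (hD : HasFDerivAt D D' p) (h : D p ≠ 0) :
    ∃ L : ℝ × ℝ →L[ℝ] ℝ, HasFDerivAt (fun q => N q / D q) L p ∧
      ∀ v, L v = (N' v * D p - N p * D' v) / D p ^ 2 := by
  have hd : DifferentiableAt ℝ (fun q => N q / D q) p :=
    by have := hN.differentiableAt; have := hD.differentiableAt; fun_prop (disch := exact h)
  refine ⟨_, hd.hasFDerivAt, fun v => ?_⟩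
  have hl : HasDerivAt (fun t : ℝ => p + t • v) v 0 := by
    simpa using ((hasDerivAt_id (0:ℝ)).smul_const v).const_add p
  have e : p + (0:ℝ) • v = p := by simp
  have h1 := HasFDerivAt.comp_hasDerivAt (0:ℝ) (by rw [e]; exact hd.hasFDerivAt) hl
  have h2 := HasFDerivAt.comp_hasDerivAt (0:ℝ) (by rw [e]; exact hN) hl
  have h3 := HasFDerivAt.comp_hasDerivAt (0:ℝ) (by rw [e]; exact hD) hl
  have h4 := h2.div h3 (by simpa using h)
  have := h1.unique h4
  simpa using this

/-- the Lie bracket of the reference frame fields is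
`[e₁, e₂] = (1/(2r²))·∂φ` where `∂φ(x,y) = (−y, x)`. -/
theorem lie_bracket_reference_frame (p : ℝ × ℝ) (hp : p ≠ 0) :
    fderiv ℝ frameE₂ p (frameE₁ p) - fderiv ℝ frameE₁ p (frameE₂ p) =
      (1 / (2 * (p.1 ^ 2 + p.2 ^ 2))) • (-p.2, p.1) := by
  obtain ⟨x, y⟩ := p
  have hr : x ^ 2 + y ^ 2 ≠ 0 := by
    intro h
    apply hp
    have hx : x = 0 := by nlinarith [sq_nonneg x, sq_nonneg y]
    have hy : y = 0 := by nlinarith [sq_nonneg x, sq_nonneg y]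
    simp [hx, hy]
  have hX : HasFDerivAt (fun q : ℝ × ℝ => q.1) (ContinuousLinearMap.fst ℝ ℝ ℝ) (x, y) :=
    hasFDerivAt_fst
  have hY : HasFDerivAt (fun q : ℝ × ℝ => q.2) (ContinuousLinearMap.snd ℝ ℝ ℝ) (x, y) :=
    hasFDerivAt_snd
  have hX2 := HasFDerivAt.pow hX 2
  have hY2 := HasFDerivAt.pow hY 2
  have hD := hX2.fun_add hY2
  obtain ⟨A, hA, hA'⟩ := quot_dir _ _ _ _ _ ((hX2.mul_const (2⁻¹ : ℝ)).fun_add hY2) hD hr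
  obtain ⟨B, hB, hB'⟩ := quot_dir _ _ _ _ _ ((HasFDerivAt.fun_mul hX hY).fun_neg) (hD.const_mul (2 : ℝ))
    (mul_ne_zero two_ne_zero hr)
  obtain ⟨C, hC, hC'⟩ := quot_dir _ _ _ _ _ ((hY2.mul_const (2⁻¹ : ℝ)).fun_add hX2) hD hr
  have h1 : HasFDerivAt frameE₁ (A.prod B) (x, y) := hA.prodMk hB
  have h2 : HasFDerivAt frameE₂ (B.prod C) (x, y) := hB.prodMk hC
  rw [h1.fderiv, h2.fderiv]
  simp only [ContinuousLinearMap.prod_apply, hA', hB', hC', frameE₁, frameE₂]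
  ext
  · simp
    field_simp
    ring
  · simp
    field_simp
    ring
end

section
/- Let g be the cone metric on ℝ² \ {0} and ω the associated connection 1-form ω(p; X) = (1/(2r²))·Xᵀ·g(p)·(−p₂, p₁). For every R > 0, the circle γ_R(t) = R·(cos t, sin t), t ∈ [0, 2π], satisfies ∫₀^{2π} ω(γ_R(t); γ_R'(t)) dt = π. -/
open Real Matrix intervalIntegral

/-- The cone metric on `ℝ² \ {0}`. -/
noncomputable def coneMetric (x y : ℝ) : Matrix (Fin 2) (Fin 2) ℝ :=
  !![1 + 3 * x ^ 2 / (x ^ 2 + y ^ 2), 3 * x * y / (x ^ 2 + y ^ 2);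
     3 * x * y / (x ^ 2 + y ^ 2), 1 + 3 * y ^ 2 / (x ^ 2 + y ^ 2)]

/-- The connection 1-form of the cone metric:
`ω(p; X) = (1/(2r²))·Xᵀ·g(p)·(−p₂, p₁)`. -/
noncomputable def connForm (p : ℝ × ℝ) (X : ℝ × ℝ) : ℝ :=
  (1 / (2 * (p.1 ^ 2 + p.2 ^ 2))) *
    (![X.1, X.2] ⬝ᵥ coneMetric p.1 p.2 *ᵥ ![-p.2, p.1])

/-- the integral of the connection form along any circle of radius
`R > 0` around the origin equals `π`. -/
theorem connection_form_integral_circle (R : ℝ) (hR : 0 < R) :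
    let γ : ℝ → ℝ × ℝ := fun t => (R * Real.cos t, R * Real.sin t)
    ∫ t in (0 : ℝ)..(2 * π), connForm (γ t) (deriv γ t) = π := by
  intro γ
  have hd : ∀ t, deriv γ t = (R * -Real.sin t, R * Real.cos t) := fun t =>
    (((Real.hasDerivAt_cos t).const_mul R).prodMk ((Real.hasDerivAt_sin t).const_mul R)).deriv
  have hc : ∀ t, connForm (γ t) (deriv γ t) = 1 / 2 := by
    intro t
    rw [hd]
    have h1 : (R * Real.cos t) ^ 2 + (R * Real.sin t) ^ 2 = R ^ 2 := by
      linear_combination R ^ 2 * Real.sin_sq_add_cos_sq t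
    have hR0 : R ≠ 0 := hR.ne'
    simp only [connForm, coneMetric, γ, h1, Matrix.mulVec, dotProduct, Fin.sum_univ_two,
      Matrix.of_apply, Matrix.cons_val_zero, Matrix.cons_val_one, Matrix.cons_val_fin_one]
    field_simp
    linear_combination Real.sin_sq_add_cos_sq t
  simp only [hc]
  rw [intervalIntegral.integral_const, smul_eq_mul]
  ring
end

section
/- Let g be the cone metric on ℝ² \ {0} and ω the associated connection 1-form ω(p; X) = (1/(2r²))·Xᵀ·g(p)·(−p₂, p₁). Let γ : [0,1] → ℝ² \ {0} be a C¹ curve and φ : [0,1] → ℝ a C¹ angle lift, i.e. γ(t) = ‖γ(t)‖·(cos φ(t), sin φ(t)) for all t. Then the geometric phase satisfies θ(γ) = ∫₀¹ ω(γ(t); γ'(t)) dt = (φ(1) − φ(0))/2. Moreover, if γ is closed, i.e. γ(0) = γ(1), then there exists an integer k (the winding number of γ around 0) with φ(1) − φ(0) = 2πk, and hence θ(γ) = π·k. -/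
open Real Matrix intervalIntegral

/-- the geometric phase along a C¹ curve `γ` avoiding the origin is
half the total variation of any C¹ angle lift `φ`; for closed curves it equals
`π` times the (integer) winding number. -/
theorem geometric_phase_eq_half_angle_variation
    (γ γ' : ℝ → ℝ × ℝ) (φ φ' : ℝ → ℝ)
    (hγ0 : ∀ t ∈ Set.Icc (0 : ℝ) 1, γ t ≠ 0)
    (hγder : ∀ t ∈ Set.Icc (0 : ℝ) 1, HasDerivAt γ (γ' t) t)
    (hγ'cont : ContinuousOn γ' (Set.Icc 0 1))
    (hφder : ∀ t ∈ Set.Icc (0 : ℝ) 1, HasDerivAt φ (φ' t) t)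
    (hφ'cont : ContinuousOn φ' (Set.Icc 0 1))
    (hlift : ∀ t ∈ Set.Icc (0 : ℝ) 1,
      γ t = Real.sqrt ((γ t).1 ^ 2 + (γ t).2 ^ 2) • (Real.cos (φ t), Real.sin (φ t))) :
    (∫ t in (0 : ℝ)..1, connForm (γ t) (γ' t)) = (φ 1 - φ 0) / 2 ∧
    (γ 0 = γ 1 → ∃ k : ℤ, φ 1 - φ 0 = 2 * π * k ∧
      (∫ t in (0 : ℝ)..1, connForm (γ t) (γ' t)) = π * k) := by
  have hpt : ∀ t ∈ Set.Icc (0 : ℝ) 1, connForm (γ t) (γ' t) = φ' t / 2 := by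
    intro t ht
    have hx : HasDerivAt (fun s => (γ s).1) (γ' t).1 t := (hγder t ht).fst
    have hy : HasDerivAt (fun s => (γ s).2) (γ' t).2 t := (hγder t ht).snd
    have hd := ((hx.mul (hφder t ht).sin).sub (hy.mul (hφder t ht).cos)).hasDerivWithinAt
      (s := Set.Icc (0 : ℝ) 1)
    have hz : ∀ s ∈ Set.Icc (0 : ℝ) 1,
        (γ s).1 * Real.sin (φ s) - (γ s).2 * Real.cos (φ s) = 0 := by
      intro s hs
      have h1 := congrArg Prod.fst (hlift s hs)
      have h2 := congrArg Prod.snd (hlift s hs)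
      simp only [Prod.smul_fst, Prod.smul_snd, smul_eq_mul] at h1 h2
      linear_combination Real.sin (φ s) * h1 - Real.cos (φ s) * h2
    have hd0 : HasDerivWithinAt (fun _ : ℝ => (0 : ℝ)) _ (Set.Icc (0 : ℝ) 1) t :=
      hd.congr (fun s hs => (hz s hs).symm) (hz t ht).symm
    have he := (uniqueDiffOn_Icc (zero_lt_one' ℝ) t ht).eq_deriv _ hd0
      (hasDerivWithinAt_const t _ (0 : ℝ))
    have h1 := congrArg Prod.fst (hlift t ht)
    have h2 := congrArg Prod.snd (hlift t ht)
    simp only [Prod.smul_fst, Prod.smul_snd, smul_eq_mul] at h1 h2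
    have hr : (γ t).1 ^ 2 + (γ t).2 ^ 2 ≠ 0 := by
      intro h
      apply hγ0 t ht
      ext
      · simp only [Prod.fst_zero]; nlinarith [sq_nonneg (γ t).1, sq_nonneg (γ t).2]
      · simp only [Prod.snd_zero]; nlinarith [sq_nonneg (γ t).1, sq_nonneg (γ t).2]
    have hk : (γ t).1 * (γ' t).2 - (γ t).2 * (γ' t).1
        = φ' t * ((γ t).1 ^ 2 + (γ t).2 ^ 2) := by
      generalize Real.sqrt ((γ t).1 ^ 2 + (γ t).2 ^ 2) = r at h1 h2
      linear_combination (-r) * he + ((γ' t).2 - φ' t * (γ t).1) * h1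
        - ((γ' t).1 + φ' t * (γ t).2) * h2
    have hc : connForm (γ t) (γ' t) = ((γ t).1 * (γ' t).2 - (γ t).2 * (γ' t).1)
        / (2 * ((γ t).1 ^ 2 + (γ t).2 ^ 2)) := by
      simp only [connForm, coneMetric, Matrix.mulVec, dotProduct, Fin.sum_univ_two]
      simp
      field_simp
      ring
    rw [hc, hk]
    field_simp
  have hu : Set.uIcc (0 : ℝ) 1 = Set.Icc 0 1 := Set.uIcc_of_le zero_le_one
  have hI : (∫ t in (0 : ℝ)..1, connForm (γ t) (γ' t)) = (φ 1 - φ 0) / 2 := by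
    rw [intervalIntegral.integral_congr (g := fun t => φ' t / 2)
      (fun t ht => hpt t (hu ▸ ht)), intervalIntegral.integral_div,
      intervalIntegral.integral_eq_sub_of_hasDerivAt (fun t ht => hφder t (hu ▸ ht))
        (ContinuousOn.intervalIntegrable (by rw [hu]; exact hφ'cont))]
  refine ⟨hI, fun hcl => ?_⟩
  have m0 : (0 : ℝ) ∈ Set.Icc (0 : ℝ) 1 := by simp
  have m1 : (1 : ℝ) ∈ Set.Icc (0 : ℝ) 1 := by simp
  have l0 := hlift 0 m0
  have l1 := hlift 1 m1
  have n1 := hγ0 1 m1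
  rw [hcl] at l0
  have hr : Real.sqrt ((γ 1).1 ^ 2 + (γ 1).2 ^ 2) ≠ 0 := by
    intro h
    rw [h, zero_smul] at l1
    exact n1 l1
  have hcs := smul_right_injective (ℝ × ℝ) hr (l0.symm.trans l1)
  have hcos : Real.cos (φ 0) = Real.cos (φ 1) := congrArg Prod.fst hcs
  have hsin : Real.sin (φ 0) = Real.sin (φ 1) := congrArg Prod.snd hcs
  have h1 : Real.cos (φ 1 - φ 0) = 1 := by
    rw [Real.cos_sub, hcos, hsin]
    nlinarith [Real.sin_sq_add_cos_sq (φ 1)]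
  obtain ⟨k, hk⟩ := (Real.cos_eq_one_iff _).1 h1
  refine ⟨k, by rw [← hk]; ring, ?_⟩
  rw [hI, ← hk]
  ring
end

section
/- Let γ : [0,1] → ℝ² \ {0} be a C¹ curve and let A(p) denote the traceless symmetric matrix [[p₁, p₂],[p₂, −p₁]]. Let ω be the connection 1-form of the cone metric, ω(p; X) = (1/(2r²))·Xᵀ·g(p)·(−p₂, p₁). Suppose θ : [0,1] → ℝ is C¹ and solves the parallel transport equation θ'(t) = ω(γ(t); γ'(t)) for all t, with initial condition that (cos θ(0), sin θ(0)) is an eigenvector of A(γ(0)) with eigenvalue ‖γ(0)‖. Then for every t ∈ [0,1], the vector (cos θ(t), sin θ(t)) is a unit eigenvector of A(γ(t)) with eigenvalue ‖γ(t)‖. -/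
open Real Matrix

/-- The traceless symmetric matrix associated with a point `p ∈ ℝ²`. -/
def symMat (p : ℝ × ℝ) : Matrix (Fin 2) (Fin 2) ℝ :=
  !![p.1, p.2; p.2, -p.1]

/-- The connection form is half the differential of the polar angle. -/
lemma connForm_eq (p X : ℝ × ℝ) (hp : p.1 ^ 2 + p.2 ^ 2 ≠ 0) :
    connForm p X = (p.1 * X.2 - p.2 * X.1) / (2 * (p.1 ^ 2 + p.2 ^ 2)) := by
  simp only [connForm, coneMetric, dotProduct, mulVec, Fin.sum_univ_two, Matrix.of_apply,
    Matrix.cons_val_zero, Matrix.cons_val_one]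
  field_simp
  ring

lemma normSq_pos_of_ne (p : ℝ × ℝ) (hp : p ≠ 0) : 0 < p.1 ^ 2 + p.2 ^ 2 := by
  by_contra h
  apply hp
  have h1 : p.1 = 0 := by nlinarith [sq_nonneg p.1, sq_nonneg p.2]
  have h2 : p.2 = 0 := by nlinarith [sq_nonneg p.1, sq_nonneg p.2]
  exact Prod.ext h1 h2

/-- Eigenvector condition in terms of the double angle. -/
lemma eigen_iff (p : ℝ × ℝ) (a : ℝ) (hp : 0 < p.1 ^ 2 + p.2 ^ 2) :
    symMat p *ᵥ ![Real.cos a, Real.sin a] =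
      Real.sqrt (p.1 ^ 2 + p.2 ^ 2) • ![Real.cos a, Real.sin a] ↔
    (p.1 * Real.cos (2 * a) + p.2 * Real.sin (2 * a)) / Real.sqrt (p.1 ^ 2 + p.2 ^ 2) = 1 := by
  have hr : 0 < Real.sqrt (p.1 ^ 2 + p.2 ^ 2) := Real.sqrt_pos.mpr hp
  have hr2 : Real.sqrt (p.1 ^ 2 + p.2 ^ 2) ^ 2 = p.1 ^ 2 + p.2 ^ 2 := Real.sq_sqrt hp.le
  have hcs := Real.sin_sq_add_cos_sq a
  rw [div_eq_one_iff_eq hr.ne', Real.cos_two_mul', Real.sin_two_mul]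
  generalize Real.sqrt (p.1 ^ 2 + p.2 ^ 2) = r at *
  generalize Real.cos a = c at *
  generalize Real.sin a = s at *
  constructor
  · intro h
    have h0 := congrFun h 0
    have h1 := congrFun h 1
    simp [symMat, mulVec, dotProduct, Fin.sum_univ_two] at h0 h1
    linear_combination c * h0 + s * h1 + r * hcs
  · intro h
    have hv : p.2 * (c ^ 2 - s ^ 2) - p.1 * (2 * s * c) = 0 := by
      have : (p.2 * (c ^ 2 - s ^ 2) - p.1 * (2 * s * c)) ^ 2 = 0 := by
        have e : (p.1 * (c ^ 2 - s ^ 2) + p.2 * (2 * s * c)) ^ 2 = r ^ 2 := by rw [h]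
        linear_combination -e - hr2 + (p.1 ^ 2 + p.2 ^ 2) * (s ^ 2 + c ^ 2 + 1) * hcs
      exact pow_eq_zero_iff (two_ne_zero) |>.mp this
    ext i
    fin_cases i
    · simp [symMat, mulVec, dotProduct, Fin.sum_univ_two]
      linear_combination c * h - s * hv - (p.1 * c + p.2 * s) * hcs
    · simp [symMat, mulVec, dotProduct, Fin.sum_univ_two]
      linear_combination s * h + c * hv - (p.2 * c - p.1 * s) * hcs

/-- parallel transport with respect to the cone metric maps
eigenvectors to eigenvectors: if the angle `θ` of a unit vector field along `γ`
solves `θ' = ω(γ; γ')` and `(cos θ(0), sin θ(0))` is an eigenvector of `A(γ(0))`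
with eigenvalue `‖γ(0)‖`, then `(cos θ(t), sin θ(t))` is an eigenvector of
`A(γ(t))` with eigenvalue `‖γ(t)‖` for all `t ∈ [0,1]`. -/
theorem parallel_transport_preserves_eigenvectors
    (γ γ' : ℝ → ℝ × ℝ) (θ : ℝ → ℝ)
    (hγ0 : ∀ t ∈ Set.Icc (0 : ℝ) 1, γ t ≠ 0)
    (hγder : ∀ t ∈ Set.Icc (0 : ℝ) 1, HasDerivAt γ (γ' t) t)
    (hγ'cont : ContinuousOn γ' (Set.Icc 0 1))
    (hθder : ∀ t ∈ Set.Icc (0 : ℝ) 1, HasDerivAt θ (connForm (γ t) (γ' t)) t)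
    (hinit : symMat (γ 0) *ᵥ ![Real.cos (θ 0), Real.sin (θ 0)] =
      Real.sqrt ((γ 0).1 ^ 2 + (γ 0).2 ^ 2) • ![Real.cos (θ 0), Real.sin (θ 0)]) :
    ∀ t ∈ Set.Icc (0 : ℝ) 1,
      symMat (γ t) *ᵥ ![Real.cos (θ t), Real.sin (θ t)] =
        Real.sqrt ((γ t).1 ^ 2 + (γ t).2 ^ 2) • ![Real.cos (θ t), Real.sin (θ t)] := by
  have hpos := fun t ht => normSq_pos_of_ne (γ t) (hγ0 t ht)
  have hder : ∀ t ∈ Set.Icc (0 : ℝ) 1, HasDerivAt (fun t =>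
      ((γ t).1 * Real.cos (2 * θ t) + (γ t).2 * Real.sin (2 * θ t)) /
        Real.sqrt ((γ t).1 ^ 2 + (γ t).2 ^ 2)) 0 t := by
    intro t ht
    have hq := hpos t ht
    have hx : HasDerivAt (fun t => (γ t).1) (γ' t).1 t := (hγder t ht).fst
    have hy : HasDerivAt (fun t => (γ t).2) (γ' t).2 t := (hγder t ht).snd
    have ht2 := (hθder t ht).const_mul 2
    rw [connForm_eq _ _ hq.ne'] at ht2
    have hr := ((hx.fun_pow 2).fun_add (hy.fun_pow 2)).sqrt hq.ne'
    have hr0 : 0 < Real.sqrt ((γ t).1 ^ 2 + (γ t).2 ^ 2) := Real.sqrt_pos.mpr hq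
    have hr2 : Real.sqrt ((γ t).1 ^ 2 + (γ t).2 ^ 2) ^ 2 = (γ t).1 ^ 2 + (γ t).2 ^ 2 :=
      Real.sq_sqrt hq.le
    have key := ((hx.fun_mul ht2.cos).fun_add (hy.fun_mul ht2.sin)).fun_div hr hr0.ne'
    refine key.congr_deriv ?_
    rw [div_eq_zero_iff]
    left
    rw [← hr2, Real.sqrt_sq hr0.le]
    generalize Real.sqrt ((γ t).1 ^ 2 + (γ t).2 ^ 2) = r at *
    field_simp
    simp only [hr2]
    push_cast
    ring
  have hconst := constant_of_has_deriv_right_zero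
    (fun t ht => (hder t ht).continuousAt.continuousWithinAt)
    (fun t ht => (hder t (Set.Ico_subset_Icc_self ht)).hasDerivWithinAt)
  intro t ht
  have h0 : (0 : ℝ) ∈ Set.Icc (0 : ℝ) 1 := by simp
  rw [eigen_iff _ _ (hpos t ht)]
  rw [eigen_iff _ _ (hpos 0 h0)] at hinit
  exact (hconst t ht).trans hinit
end

section
/- Let R > 0 and let γ(t) = R·(cos 2πt, sin 2πt), t ∈ [0,1], be a loop of winding number 1 around the origin. Let ω be the connection 1-form of the cone metric, ω(p; X) = (1/(2r²))·Xᵀ·g(p)·(−p₂, p₁). If v : [0,1] → ℝ² is a C¹ solution of the parallel transport equation v'(t) = ω(γ(t); γ'(t))·(−v₂(t), v₁(t)), then v(1) = −v(0). In particular, parallel transport around a simple loop enclosing the origin acts as −Id on frame components, so the holonomy of the cone metric on ℝ² \ {0} contains the element of order 2 (rotation by π). -/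
open Real Matrix

/-- parallel transport of frame components around a loop of winding
number 1 about the origin acts as `−Id`: any C¹ solution of the parallel
transport equation `v' = ω(γ; γ')·(−v₂, v₁)` along `γ(t) = R(cos 2πt, sin 2πt)`
satisfies `v(1) = −v(0)`. -/
theorem holonomy_of_simple_loop (R : ℝ) (hR : 0 < R)
    (v : ℝ → ℝ × ℝ)
    (hv : ∀ t ∈ Set.Icc (0 : ℝ) 1,
      HasDerivAt v
        (connForm (R * Real.cos (2 * π * t), R * Real.sin (2 * π * t))
            (-(2 * π * R * Real.sin (2 * π * t)), 2 * π * R * Real.cos (2 * π * t)) •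
          (-(v t).2, (v t).1)) t) :
    v 1 = -v 0 := by
  have hω : ∀ t : ℝ, connForm (R * Real.cos (2 * π * t), R * Real.sin (2 * π * t))
      (-(2 * π * R * Real.sin (2 * π * t)), 2 * π * R * Real.cos (2 * π * t)) = π := by
    intro t
    have h1 := Real.sin_sq_add_cos_sq (2 * π * t)
    have hr : (R * Real.cos (2 * π * t)) ^ 2 + (R * Real.sin (2 * π * t)) ^ 2 = R ^ 2 := by
      linear_combination R ^ 2 * h1
    have hR' : R ≠ 0 := hR.ne'
    simp only [connForm, coneMetric, hr]
    simp [Matrix.mulVec, dotProduct, Fin.sum_univ_two]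
    field_simp
    linear_combination h1
  simp only [hω] at hv
  have key : ∀ f : ℝ → ℝ, (∀ t ∈ Set.Icc (0 : ℝ) 1, HasDerivAt f 0 t) → f 1 = f 0 := by
    intro f hf
    refine constant_of_has_deriv_right_zero
      (fun t ht => (hf t ht).continuousAt.continuousWithinAt)
      (fun t ht => (hf t (Set.Ico_subset_Icc_self ht)).hasDerivWithinAt) 1 (by simp)
  have d1 : ∀ t ∈ Set.Icc (0 : ℝ) 1, HasDerivAt (fun s => (v s).1) (π * -(v t).2) t :=
    fun t ht => by simpa using (hv t ht).hasFDerivAt.fst.hasDerivAt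
  have d2 : ∀ t ∈ Set.Icc (0 : ℝ) 1, HasDerivAt (fun s => (v s).2) (π * (v t).1) t :=
    fun t ht => by simpa using (hv t ht).hasFDerivAt.snd.hasDerivAt
  have dl : ∀ t : ℝ, HasDerivAt (fun s : ℝ => π * s) π t := fun t => by
    simpa using (hasDerivAt_id t).const_mul π
  have ha := key (fun t => (v t).1 * Real.cos (π * t) + (v t).2 * Real.sin (π * t))
    (fun t ht => by
      exact (((d1 t ht).mul (dl t).cos).add ((d2 t ht).mul (dl t).sin)).congr_deriv (by ring))
  have hb := key (fun t => (v t).2 * Real.cos (π * t) - (v t).1 * Real.sin (π * t))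
    (fun t ht => by
      exact (((d2 t ht).mul (dl t).cos).sub ((d1 t ht).mul (dl t).sin)).congr_deriv (by ring))
  simp at ha hb
  ext
  · simp; linarith
  · simp; linarith
end

section
/- Let F : ℝ² \ {0} → ℝ³ be given by F(x,y) = ((x² − y²)/r, 2xy/r, √3·r) with r = √(x²+y²), i.e. the composition of the branched double cover π(r·e^{iφ}) = r·e^{i2φ} with the cone parametrization f(x,y) = (x, y, √3·r). Let h(p) = (DF(p))ᵀ·(DF(p)) be the pullback metric. Then for every r > 0 and φ, at p = (r·cos φ, r·sin φ), with ∂r = (cos φ, sin φ) and ∂φ = (−r·sin φ, r·cos φ): ∂rᵀ·h(p)·∂r = 4, ∂φᵀ·h(p)·∂φ = 4r², and ∂rᵀ·h(p)·∂φ = 0; i.e., in polar coordinates h = diag(4, 4r²). -/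
open Real Matrix

/-- The composition `f ∘ π` of the branched double cover
`π(r·e^{iφ}) = r·e^{i2φ}` with the cone parametrization
`f(x,y) = (x, y, √3·r)`, i.e. `F(x,y) = ((x²−y²)/r, 2xy/r, √3·r)`. -/
noncomputable def coverPar : ℝ × ℝ → (Fin 3 → ℝ) :=
  fun p => ![(p.1 ^ 2 - p.2 ^ 2) / Real.sqrt (p.1 ^ 2 + p.2 ^ 2),
             2 * p.1 * p.2 / Real.sqrt (p.1 ^ 2 + p.2 ^ 2),
             Real.sqrt 3 * Real.sqrt (p.1 ^ 2 + p.2 ^ 2)]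

theorem coverPar_polar (t s : ℝ) (ht : 0 < t) :
    coverPar (t * Real.cos s, t * Real.sin s)
      = ![t * Real.cos (2 * s), t * Real.sin (2 * s), Real.sqrt 3 * t] := by
  have h : Real.sqrt ((t * Real.cos s) ^ 2 + (t * Real.sin s) ^ 2) = t := by
    rw [show (t * Real.cos s) ^ 2 + (t * Real.sin s) ^ 2 = t ^ 2 by
      nlinarith [Real.sin_sq_add_cos_sq s]]
    exact Real.sqrt_sq ht.le
  have ht' := ht.ne'
  have h1 : ((t * Real.cos s) ^ 2 - (t * Real.sin s) ^ 2) / t = t * Real.cos (2 * s) := by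
    rw [Real.cos_two_mul']
    field_simp
  have h2 : 2 * (t * Real.cos s) * (t * Real.sin s) / t = t * Real.sin (2 * s) := by
    rw [Real.sin_two_mul]
    field_simp
  simp only [coverPar, h, h1, h2]

theorem coverPar_diff (p : ℝ × ℝ) (hp : p.1 ^ 2 + p.2 ^ 2 ≠ 0) :
    DifferentiableAt ℝ coverPar p := by
  have hs : Real.sqrt (p.1 ^ 2 + p.2 ^ 2) ≠ 0 := by
    rw [Real.sqrt_ne_zero (by positivity)]
    exact hp
  have hd : DifferentiableAt ℝ (fun q : ℝ × ℝ => Real.sqrt (q.1 ^ 2 + q.2 ^ 2)) p :=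
    DifferentiableAt.sqrt (by fun_prop) hp
  rw [differentiableAt_pi]
  intro i
  fin_cases i
  · have hn : DifferentiableAt ℝ (fun q : ℝ × ℝ => q.1 ^ 2 - q.2 ^ 2) p := by fun_prop
    have hq := hn.fun_mul (hd.fun_inv hs)
    simp only [← div_eq_mul_inv] at hq
    exact hq
  · have hn : DifferentiableAt ℝ (fun q : ℝ × ℝ => 2 * q.1 * q.2) p := by fun_prop
    have hq := hn.fun_mul (hd.fun_inv hs)
    simp only [← div_eq_mul_inv] at hq
    exact hq
  · exact hd.const_mul _

/-- the pullback metric `h = (DF)ᵀ(DF)` of the branched double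
cover composed with the cone parametrization is `diag(4, 4r²)` in polar
coordinates: `∂rᵀh∂r = 4`, `∂φᵀh∂φ = 4r²`, `∂rᵀh∂φ = 0`. -/
theorem pullback_metric_on_cover_polar (r φ : ℝ) (hr : 0 < r) :
    let p : ℝ × ℝ := (r * Real.cos φ, r * Real.sin φ)
    let dr : ℝ × ℝ := (Real.cos φ, Real.sin φ)
    let dφ : ℝ × ℝ := (-(r * Real.sin φ), r * Real.cos φ)
    (fderiv ℝ coverPar p dr) ⬝ᵥ (fderiv ℝ coverPar p dr) = 4 ∧
    (fderiv ℝ coverPar p dφ) ⬝ᵥ (fderiv ℝ coverPar p dφ) = 4 * r ^ 2 ∧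
    (fderiv ℝ coverPar p dr) ⬝ᵥ (fderiv ℝ coverPar p dφ) = 0 := by
  intro p dr dφ
  have hp : p.1 ^ 2 + p.2 ^ 2 ≠ 0 := by
    have : p.1 ^ 2 + p.2 ^ 2 = r ^ 2 := by
      simp only [p]
      nlinarith [Real.sin_sq_add_cos_sq φ]
    rw [this]
    positivity
  have hF := (coverPar_diff p hp).hasFDerivAt
  have e1 : fderiv ℝ coverPar p dr
      = ![Real.cos (2 * φ), Real.sin (2 * φ), Real.sqrt 3] := by
    have hc : HasDerivAt (fun t : ℝ => (t * Real.cos φ, t * Real.sin φ)) dr r :=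
      (hasDerivAt_mul_const _).prodMk (hasDerivAt_mul_const _)
    have h1 := HasFDerivAt.comp_hasDerivAt (f := fun t : ℝ => (t * Real.cos φ, t * Real.sin φ))
      r hF hc
    have h2 : HasDerivAt (fun t : ℝ => ![t * Real.cos (2 * φ), t * Real.sin (2 * φ),
        Real.sqrt 3 * t]) ![Real.cos (2 * φ), Real.sin (2 * φ), Real.sqrt 3] r := by
      rw [hasDerivAt_pi]
      intro i
      fin_cases i
      · exact hasDerivAt_mul_const _
      · exact hasDerivAt_mul_const _
      · exact hasDerivAt_const_mul _
    refine h1.unique (h2.congr_of_eventuallyEq ?_)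
    filter_upwards [lt_mem_nhds hr] with t ht
    exact coverPar_polar t φ ht
  have e2 : fderiv ℝ coverPar p dφ
      = ![-(2 * r * Real.sin (2 * φ)), 2 * r * Real.cos (2 * φ), 0] := by
    have hc : HasDerivAt (fun t : ℝ => (r * Real.cos t, r * Real.sin t)) dφ φ := by
      refine HasDerivAt.prodMk ?_ ((Real.hasDerivAt_sin φ).const_mul r)
      have := (Real.hasDerivAt_cos φ).const_mul r
      rwa [mul_neg] at this
    have h1 := HasFDerivAt.comp_hasDerivAt (f := fun t : ℝ => (r * Real.cos t, r * Real.sin t))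
      φ hF hc
    have hm : HasDerivAt (fun t : ℝ => 2 * t) 2 φ := hasDerivAt_const_mul _
    have h2 : HasDerivAt (fun t : ℝ => ![r * Real.cos (2 * t), r * Real.sin (2 * t),
        Real.sqrt 3 * r]) ![-(2 * r * Real.sin (2 * φ)), 2 * r * Real.cos (2 * φ), 0] φ := by
      rw [hasDerivAt_pi]
      intro i
      fin_cases i
      · exact (hm.cos.const_mul r).congr_deriv (by simp; ring)
      · exact (hm.sin.const_mul r).congr_deriv (by simp; ring)
      · exact hasDerivAt_const _ _
    refine h1.unique (h2.congr_of_eventuallyEq ?_)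
    filter_upwards with t
    exact coverPar_polar r t hr
  have h3 : Real.sqrt 3 * Real.sqrt 3 = 3 := Real.mul_self_sqrt (by norm_num)
  have hsc := Real.sin_sq_add_cos_sq (2 * φ)
  rw [e1, e2]
  simp only [dotProduct, Fin.sum_univ_three, Matrix.cons_val]
  refine ⟨?_, ?_, ?_⟩
  · linear_combination hsc + h3
  · linear_combination 4 * r ^ 2 * hsc
  · ring
end

section
/- Let h be the pullback metric on the branched double cover, given in polar coordinates by diag(4, 4r²), i.e. h(p) = (DF(p))ᵀ·DF(p) for F(x,y) = ((x²−y²)/r, 2xy/r, √3·r), and define the connection 1-form ω_h(p; X) = (1/(4r²))·Xᵀ·h(p)·(−p₂, p₁). Let γ : [0,1] → ℝ² \ {0} be a C¹ curve with C¹ angle lift φ, i.e. γ(t) = ‖γ(t)‖·(cos φ(t), sin φ(t)). Then ∫₀¹ ω_h(γ(t); γ'(t)) dt = φ(1) − φ(0); in particular ω_h = dφ, and for a closed curve γ the geometric phase equals 2π times the (integer) winding number of γ around 0, so the holonomy of h on ℝ² \ {0} is trivial. -/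
open Real Matrix intervalIntegral

/-- The connection 1-form on the branched double cover:
`ω_h(p; X) = (1/(4r²))·Xᵀ·h(p)·(−p₂, p₁)`, where `h(p) = (DF(p))ᵀ·DF(p)`. -/
noncomputable def connFormCover (p : ℝ × ℝ) (X : ℝ × ℝ) : ℝ :=
  (1 / (4 * (p.1 ^ 2 + p.2 ^ 2))) *
    ((fderiv ℝ coverPar p X) ⬝ᵥ (fderiv ℝ coverPar p (-p.2, p.1)))

/-- Explicit directional derivative of `coverPar` away from the origin. -/
theorem coverPar_fderiv (x y : ℝ) (h : 0 < x ^ 2 + y ^ 2) (X : ℝ × ℝ) (s : ℝ)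
    (hs : s = Real.sqrt (x ^ 2 + y ^ 2)) :
    fderiv ℝ coverPar (x, y) X =
      ![(2 * x * X.1 - 2 * y * X.2) / s - (x ^ 2 - y ^ 2) * (x * X.1 + y * X.2) / s ^ 3,
        (2 * y * X.1 + 2 * x * X.2) / s - 2 * x * y * (x * X.1 + y * X.2) / s ^ 3,
        Real.sqrt 3 * ((x * X.1 + y * X.2) / s)] := by
  have hs0 : 0 < s := hs ▸ Real.sqrt_pos.2 h
  have h1 : HasFDerivAt (fun p : ℝ × ℝ => p.1) (ContinuousLinearMap.fst ℝ ℝ ℝ) (x, y) :=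
    hasFDerivAt_fst
  have h2 : HasFDerivAt (fun p : ℝ × ℝ => p.2) (ContinuousLinearMap.snd ℝ ℝ ℝ) (x, y) :=
    hasFDerivAt_snd
  have hq := (h1.pow 2).add (h2.pow 2)
  have hr := hq.sqrt (by simpa using h.ne')
  have hri := (hasDerivAt_inv (x := Real.sqrt (x ^ 2 + y ^ 2))
    (by rw [← hs]; exact hs0.ne')).comp_hasFDerivAt (x, y) hr
  have e0 := ((h1.pow 2).sub (h2.pow 2)).mul hri
  have e1 := ((h1.const_mul 2).mul h2).mul hri
  have e2 := hr.const_mul (Real.sqrt 3)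
  have hdiff : DifferentiableAt ℝ coverPar (x, y) := by
    rw [differentiableAt_pi]
    intro i
    fin_cases i
    · exact e0.differentiableAt
    · exact e1.differentiableAt
    · exact e2.differentiableAt
  have hp := hasFDerivAt_pi'.1 hdiff.hasFDerivAt
  have f0 := congrArg (fun L => L X) ((hp 0).unique e0)
  have f1 := congrArg (fun L => L X) ((hp 1).unique e1)
  have f2 := congrArg (fun L => L X) ((hp 2).unique e2)
  ext i
  fin_cases i
  · simp [← hs] at f0 ⊢
    rw [f0]; field_simp; ring
  · simp [← hs] at f1 ⊢
    rw [f1]; field_simp; ring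
  · simp [← hs] at f2 ⊢
    rw [f2]; field_simp

/-- The connection form is `(x dy - y dx) / r²`. -/
theorem connFormCover_eq (x y : ℝ) (h : 0 < x ^ 2 + y ^ 2) (X : ℝ × ℝ) :
    connFormCover (x, y) X = (x * X.2 - y * X.1) / (x ^ 2 + y ^ 2) := by
  obtain ⟨s, hs⟩ : ∃ s, s = Real.sqrt (x ^ 2 + y ^ 2) := ⟨_, rfl⟩
  have hs0 : 0 < s := hs ▸ Real.sqrt_pos.2 h
  have hss : x ^ 2 + y ^ 2 = s ^ 2 := by rw [hs, Real.sq_sqrt h.le]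
  unfold connFormCover
  rw [coverPar_fderiv x y h X s hs, coverPar_fderiv x y h _ s hs]
  simp only [dotProduct, Fin.sum_univ_three, Matrix.cons_val]
  rw [hss]
  have hx : x ^ 2 = s ^ 2 - y ^ 2 := by linarith
  have hz : x * -y + y * x = 0 := by ring
  simp only [hz]
  field_simp
  simp only [mul_zero, zero_div, sub_zero, add_zero]
  have hx3 : x ^ 3 = x * (s ^ 2 - y ^ 2) := by rw [← hx]; ring
  have hx4 : x ^ 4 = (s ^ 2 - y ^ 2) ^ 2 := by rw [← hx]; ring
  ring_nf
  simp only [hx, hx3, hx4]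
  ring

/-- on the branched double cover the connection form is `dφ`:
the geometric phase along a C¹ curve equals the total angle variation
`φ(1) − φ(0)`, and for closed curves it is `2π` times the integer winding
number (so the holonomy on `ℝ² \ {0}` is trivial). -/
theorem cover_geometric_phase_eq_angle_variation
    (γ γ' : ℝ → ℝ × ℝ) (φ φ' : ℝ → ℝ)
    (hγ0 : ∀ t ∈ Set.Icc (0 : ℝ) 1, γ t ≠ 0)
    (hγder : ∀ t ∈ Set.Icc (0 : ℝ) 1, HasDerivAt γ (γ' t) t)
    (hγ'cont : ContinuousOn γ' (Set.Icc 0 1))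
    (hφder : ∀ t ∈ Set.Icc (0 : ℝ) 1, HasDerivAt φ (φ' t) t)
    (hφ'cont : ContinuousOn φ' (Set.Icc 0 1))
    (hlift : ∀ t ∈ Set.Icc (0 : ℝ) 1,
      γ t = Real.sqrt ((γ t).1 ^ 2 + (γ t).2 ^ 2) • (Real.cos (φ t), Real.sin (φ t))) :
    (∫ t in (0 : ℝ)..1, connFormCover (γ t) (γ' t)) = φ 1 - φ 0 ∧
    (γ 0 = γ 1 → ∃ k : ℤ, φ 1 - φ 0 = 2 * π * k ∧
      (∫ t in (0 : ℝ)..1, connFormCover (γ t) (γ' t)) = 2 * π * k) := by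
  have hpos : ∀ t ∈ Set.Icc (0 : ℝ) 1, 0 < (γ t).1 ^ 2 + (γ t).2 ^ 2 := by
    intro t ht
    by_contra hc
    apply hγ0 t ht
    have a := sq_nonneg (γ t).1
    have b := sq_nonneg (γ t).2
    have a' : (γ t).1 = 0 := pow_eq_zero_iff (two_ne_zero) |>.1 (by linarith)
    have b' : (γ t).2 = 0 := pow_eq_zero_iff (two_ne_zero) |>.1 (by linarith)
    exact Prod.ext a' b'
  have hl1 : ∀ t ∈ Set.Icc (0 : ℝ) 1,
      (γ t).1 = Real.sqrt ((γ t).1 ^ 2 + (γ t).2 ^ 2) * Real.cos (φ t) :=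
    fun t ht => congrArg Prod.fst (hlift t ht)
  have hl2 : ∀ t ∈ Set.Icc (0 : ℝ) 1,
      (γ t).2 = Real.sqrt ((γ t).1 ^ 2 + (γ t).2 ^ 2) * Real.sin (φ t) :=
    fun t ht => congrArg Prod.snd (hlift t ht)
  have key : ∀ t ∈ Set.Icc (0 : ℝ) 1, connFormCover (γ t) (γ' t) = φ' t := by
    intro t ht
    have hp := hpos t ht
    have d1 : HasDerivAt (fun u => (γ u).1) (γ' t).1 t := (hγder t ht).fst
    have d2 : HasDerivAt (fun u => (γ u).2) (γ' t).2 t := (hγder t ht).snd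
    have dG := ((d1.mul (hφder t ht).sin).sub (d2.mul (hφder t ht).cos)).hasDerivWithinAt
      (s := Set.Icc (0 : ℝ) 1)
    have dZ : HasDerivWithinAt (fun _ : ℝ => (0 : ℝ)) 0 (Set.Icc 0 1) t :=
      hasDerivWithinAt_const _ _ _
    have hG : ∀ u ∈ Set.Icc (0 : ℝ) 1,
        (γ u).1 * Real.sin (φ u) - (γ u).2 * Real.cos (φ u) = 0 := by
      intro u hu
      have a := hl1 u hu
      have b := hl2 u hu
      generalize Real.sqrt ((γ u).1 ^ 2 + (γ u).2 ^ 2) = r at a b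
      rw [a, b]; ring
    have e := (uniqueDiffOn_Icc (zero_lt_one' ℝ) t ht).eq_deriv _ dG
      (dZ.congr hG (hG t ht))
    have c := connFormCover_eq (γ t).1 (γ t).2 hp (γ' t)
    rw [Prod.mk.eta] at c
    rw [c, div_eq_iff hp.ne']
    have a := hl1 t ht
    have b := hl2 t ht
    have hr := Real.sq_sqrt hp.le
    generalize Real.sqrt ((γ t).1 ^ 2 + (γ t).2 ^ 2) = r at a b hr
    generalize (γ t).1 = x at *
    generalize (γ t).2 = y at *
    generalize Real.cos (φ t) = c at *
    generalize Real.sin (φ t) = s at *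
    subst a b
    linear_combination (-r) * e
  have hint : (∫ t in (0 : ℝ)..1, connFormCover (γ t) (γ' t)) = φ 1 - φ 0 := by
    rw [intervalIntegral.integral_congr (g := φ')
      (fun t ht => key t (by rwa [Set.uIcc_of_le zero_le_one] at ht))]
    apply intervalIntegral.integral_eq_sub_of_hasDerivAt
    · intro t ht
      exact hφder t (by rwa [Set.uIcc_of_le zero_le_one] at ht)
    · apply ContinuousOn.intervalIntegrable
      rwa [Set.uIcc_of_le zero_le_one]
  refine ⟨hint, fun hc => ?_⟩
  have m0 : (0 : ℝ) ∈ Set.Icc (0 : ℝ) 1 := by simp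
  have m1 : (1 : ℝ) ∈ Set.Icc (0 : ℝ) 1 := by simp
  have hr := Real.sqrt_pos.2 (hpos 1 m1)
  have a0 := hl1 0 m0
  have b0 := hl2 0 m0
  have a1 := hl1 1 m1
  have b1 := hl2 1 m1
  rw [hc] at a0 b0
  have hcos : Real.cos (φ 1) = Real.cos (φ 0) :=
    mul_left_cancel₀ hr.ne' (a1.symm.trans a0)
  have hsin : Real.sin (φ 1) = Real.sin (φ 0) :=
    mul_left_cancel₀ hr.ne' (b1.symm.trans b0)
  have h1 : Real.cos (φ 1 - φ 0) = 1 := by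
    rw [Real.cos_sub, hcos, hsin]
    nlinarith [Real.sin_sq_add_cos_sq (φ 0)]
  obtain ⟨k, hk⟩ := (Real.cos_eq_one_iff _).1 h1
  have hk' : φ 1 - φ 0 = 2 * π * k := by rw [← hk]; ring
  exact ⟨k, hk', hint.trans hk'⟩
end

section
/- Let U ⊆ ℝ² be open and let E₁, E₂, ν : U → ℝ³ be C¹ maps such that at every point of U the triple (E₁, E₂, ν) is orthonormal in ℝ³ (⟨E_a, E_b⟩ = δ_ab for a,b ∈ {1,2,3} with E₃ = ν). Then at every point of U: ⟨∂₁E₁, ∂₂E₂⟩ − ⟨∂₂E₁, ∂₁E₂⟩ = ⟨∂₁E₁, ν⟩·⟨∂₂E₂, ν⟩ − ⟨∂₂E₁, ν⟩·⟨∂₁E₂, ν⟩. -/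
open Real Matrix

theorem aux_parseval (a b c x y : Fin 3 → ℝ)
    (haa : a ⬝ᵥ a = 1) (hbb : b ⬝ᵥ b = 1) (hcc : c ⬝ᵥ c = 1)
    (hab : a ⬝ᵥ b = 0) (hac : a ⬝ᵥ c = 0) (hbc : b ⬝ᵥ c = 0) :
    x ⬝ᵥ y = (x ⬝ᵥ a) * (y ⬝ᵥ a) + (x ⬝ᵥ b) * (y ⬝ᵥ b) + (x ⬝ᵥ c) * (y ⬝ᵥ c) := by
  have h1 : (Matrix.of ![a, b, c]) * (Matrix.of ![a, b, c])ᵀ = 1 := by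
    ext i j
    change (![a, b, c] i) ⬝ᵥ (![a, b, c] j) = _
    fin_cases i <;> fin_cases j <;>
      simp [haa, hbb, hcc, hab, hac, hbc, dotProduct_comm b a, dotProduct_comm c a,
        dotProduct_comm c b]
  have h2 := mul_eq_one_comm.mp h1
  have h3 : x ⬝ᵥ y =
      (Matrix.of ![a, b, c] *ᵥ x) ⬝ᵥ (Matrix.of ![a, b, c] *ᵥ y) := by
    rw [Matrix.dotProduct_mulVec, ← Matrix.mulVec_transpose, Matrix.mulVec_mulVec, h2,
      Matrix.one_mulVec]
  rw [h3]
  simp only [dotProduct, Matrix.mulVec, Fin.sum_univ_three, Matrix.of_apply, Matrix.cons_val]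
  ring

theorem aux_deriv (U : Set (ℝ × ℝ)) (hU : IsOpen U) (E : ℝ × ℝ → (Fin 3 → ℝ))
    (hE : ContDiffOn ℝ 1 E U) (h : ∀ p ∈ U, E p ⬝ᵥ E p = 1)
    (p : ℝ × ℝ) (hp : p ∈ U) (v : ℝ × ℝ) : fderiv ℝ E p v ⬝ᵥ E p = 0 := by
  have hd : HasFDerivAt E (fderiv ℝ E p) p :=
    ((hE.differentiableOn one_ne_zero).differentiableAt (hU.mem_nhds hp)).hasFDerivAt
  have hi := hasFDerivAt_pi'.mp hd
  have h1 := ((hi 0).mul (hi 0)).add (((hi 1).mul (hi 1)).add ((hi 2).mul (hi 2)))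
  have h2 : HasFDerivAt (fun _ : ℝ × ℝ => (1 : ℝ)) (0 : ℝ × ℝ →L[ℝ] ℝ) p :=
    hasFDerivAt_const _ _
  have h3 := h2.congr_of_eventuallyEq (f₁ := fun q => E q 0 * E q 0 + (E q 1 * E q 1 + E q 2 * E q 2)) (by
    filter_upwards [hU.mem_nhds hp] with q hq
    have := h q hq
    simp only [dotProduct, Fin.sum_univ_three] at this
    linarith)
  have h4 := congrArg (fun L => L v) (h1.unique h3)
  simp at h4
  simp only [dotProduct, Fin.sum_univ_three]
  linarith

/-- for a C¹ orthonormal frame `(E₁, E₂, ν)` in `ℝ³` over an open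
domain `U ⊆ ℝ²`, the Berry curvature equals the determinant-like combination of
second-fundamental-form entries:
`⟨∂₁E₁, ∂₂E₂⟩ − ⟨∂₂E₁, ∂₁E₂⟩ = ⟨∂₁E₁, ν⟩⟨∂₂E₂, ν⟩ − ⟨∂₂E₁, ν⟩⟨∂₁E₂, ν⟩`. -/
theorem berry_curvature_second_fundamental_form
    (U : Set (ℝ × ℝ)) (hU : IsOpen U)
    (E₁ E₂ ν : ℝ × ℝ → (Fin 3 → ℝ))
    (hE₁ : ContDiffOn ℝ 1 E₁ U) (hE₂ : ContDiffOn ℝ 1 E₂ U)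
    (hν : ContDiffOn ℝ 1 ν U)
    (horth : ∀ p ∈ U,
      E₁ p ⬝ᵥ E₁ p = 1 ∧ E₂ p ⬝ᵥ E₂ p = 1 ∧ ν p ⬝ᵥ ν p = 1 ∧
      E₁ p ⬝ᵥ E₂ p = 0 ∧ E₁ p ⬝ᵥ ν p = 0 ∧ E₂ p ⬝ᵥ ν p = 0)
    (p : ℝ × ℝ) (hp : p ∈ U) :
    (fderiv ℝ E₁ p (1, 0)) ⬝ᵥ (fderiv ℝ E₂ p (0, 1)) -
      (fderiv ℝ E₁ p (0, 1)) ⬝ᵥ (fderiv ℝ E₂ p (1, 0)) =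
    ((fderiv ℝ E₁ p (1, 0)) ⬝ᵥ ν p) * ((fderiv ℝ E₂ p (0, 1)) ⬝ᵥ ν p) -
      ((fderiv ℝ E₁ p (0, 1)) ⬝ᵥ ν p) * ((fderiv ℝ E₂ p (1, 0)) ⬝ᵥ ν p) := by
  obtain ⟨h1, h2, h3, h4, h5, h6⟩ := horth p hp
  have d1 := aux_deriv U hU E₁ hE₁ (fun q hq => (horth q hq).1) p hp
  have d2 := aux_deriv U hU E₂ hE₂ (fun q hq => (horth q hq).2.1) p hp
  rw [aux_parseval _ _ _ (fderiv ℝ E₁ p (1, 0)) (fderiv ℝ E₂ p (0, 1)) h1 h2 h3 h4 h5 h6,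
    aux_parseval _ _ _ (fderiv ℝ E₁ p (0, 1)) (fderiv ℝ E₂ p (1, 0)) h1 h2 h3 h4 h5 h6]
  simp only [d1, d2]
  ring
end
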